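/- Let (Ω, ℱ, P) be a probability space, D : Ω → ℝ a bounded measurable random variable, ℋ, 𝒢 ⊆ ℱ sub-σ-algebras, and m₀ a 𝒢-measurable version of E[D | 𝒢] (the propensity score, with 𝒢 = σ(X) and ℋ the σ-algebra generated by the potential outcomes). Assume the unconfoundedness condition E[D | ℋ ⊔ 𝒢] = m₀ P-almost surely, where ℋ ⊔ 𝒢 denotes the σ-algebra generated by ℋ and 𝒢. Then E[D | ℋ ⊔ σ(m₀)] = m₀ P-almost surely; in particular E[D | ℋ ⊔ σ(m₀)] = E[D | σ(m₀)] P-almost surely, so conditional mean independence of D from ℋ given the covariates propagates to conditioning on the propensity score alone. -/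

import Mathlib

open MeasureTheory

/-!
Conditioning `D` on a σ-algebra lying between `B` and one for which `m₀` is already a version of the
conditional expectation cannot change the answer: by the tower property the new conditional
expectation is that of `m₀`, which is `B`-measurable. Both `H ⊔ B` and `B` fit this description as
soon as `m₀` is `B`-measurable and `B ≤ G`, that is, as soon as `B` comes from a balancing score in
the sense of Rosenbaum and Rubin; the propensity score gives the smallest such `B`.
-/

section

variable {Ω E : Type*} {F : MeasurableSpace Ω} {μ : Measure Ω}
  [NormedAddCommGroup E] [NormedSpace ℝ E] [CompleteSpace E]

theorem condExp_ae_eq_of_le_of_stronglyMeasurable {m₁ m₂ : MeasurableSpace Ω} {f g : Ω → E}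
    (h₁₂ : m₁ ≤ m₂) (h₂ : m₂ ≤ F) [SigmaFinite (μ.trim (h₁₂.trans h₂))]
    (hg : StronglyMeasurable[m₁] g) (hfg : μ[f | m₂] =ᵐ[μ] g) :
    μ[f | m₁] =ᵐ[μ] g := by
  have : SigmaFinite (μ.trim h₂) := sigmaFiniteTrim_mono h₂ h₁₂
  have hg_int : Integrable g μ := integrable_condExp.congr hfg
  calc
    μ[f | m₁] =ᵐ[μ] μ[μ[f | m₂] | m₁] := (condExp_condExp_of_le h₁₂ h₂).symm
    _ =ᵐ[μ] μ[g | m₁] := condExp_congr_ae hfg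
    _ = g := condExp_of_stronglyMeasurable (h₁₂.trans h₂) hg hg_int

theorem unconfoundedness_propensity_score_general {H G B : MeasurableSpace Ω} {D m₀ : Ω → E}
    (_hD : Integrable D μ) (hH : H ≤ F) (hG : G ≤ F) (hBG : B ≤ G)
    [SigmaFinite (μ.trim (hBG.trans hG))]
    (hm₀ : StronglyMeasurable[B] m₀) (hm₀ver : m₀ =ᵐ[μ] μ[D | G])
    (huncf : μ[D | H ⊔ G] =ᵐ[μ] μ[D | G]) :
    μ[D | H ⊔ B] =ᵐ[μ] m₀ ∧ μ[D | H ⊔ B] =ᵐ[μ] μ[D | B] := by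
  have hHG : H ⊔ G ≤ F := sup_le hH hG
  have hHB : H ⊔ B ≤ H ⊔ G := sup_le_sup_left hBG H
  have : SigmaFinite (μ.trim (hHB.trans hHG)) :=
    sigmaFiniteTrim_mono (hHB.trans hHG) le_sup_right
  have condExp_sup : μ[D | H ⊔ B] =ᵐ[μ] m₀ :=
    condExp_ae_eq_of_le_of_stronglyMeasurable hHB hHG (hm₀.mono le_sup_right)
      (huncf.trans hm₀ver.symm)
  have condExp_score : μ[D | B] =ᵐ[μ] m₀ :=
    condExp_ae_eq_of_le_of_stronglyMeasurable hBG hG hm₀ hm₀ver.symm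
  exact ⟨condExp_sup, condExp_sup.trans condExp_score.symm⟩

end

/-- Unconfoundedness propagates to conditioning on the propensity score:
if `E[D | ℋ ⊔ 𝒢] = m₀` a.s. where `m₀` is a `𝒢`-measurable version of `E[D | 𝒢]`, then
`E[D | ℋ ⊔ σ(m₀)] = m₀` a.s. and in particular `E[D | ℋ ⊔ σ(m₀)] = E[D | σ(m₀)]` a.s. -/
theorem unconfoundedness_propensity_score
    {Ω : Type*} [F : MeasurableSpace Ω] (P : Measure Ω) [IsProbabilityMeasure P]
    (D : Ω → ℝ) (hD : Measurable D) (C : ℝ) (hDbd : ∀ ω, |D ω| ≤ C)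
    (H G : MeasurableSpace Ω) (hH : H ≤ F) (hG : G ≤ F)
    (m₀ : Ω → ℝ) (hm₀ : Measurable[G] m₀) (hm₀ver : m₀ =ᵐ[P] P[D | G])
    (huncf : P[D | H ⊔ G] =ᵐ[P] m₀) :
    P[D | H ⊔ MeasurableSpace.comap m₀ inferInstance] =ᵐ[P] m₀ ∧
    P[D | H ⊔ MeasurableSpace.comap m₀ inferInstance]
      =ᵐ[P] P[D | MeasurableSpace.comap m₀ inferInstance] :=
  unconfoundedness_propensity_score_general
    (.of_bound hD.aestronglyMeasurable C (.of_forall hDbd)) hH hG hm₀.comap_le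
    (comap_measurable m₀).stronglyMeasurable hm₀ver (huncf.trans hm₀ver)
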